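/- arXiv:2605.26234 — 2 statements merged into one kernel-verified Lean document; each statement's English description precedes it below -/
import Mathlib

section
/- Let n ≥ 1, let γ : S¹ → ℝⁿ be a smooth embedding, and let Γ be a smooth map from an open neighbourhood of D² to ℝⁿ satisfying Γ(p) = γ(p) and ∂_r Γ(p) = γ(p) for all p ∈ S¹. Let ρ be a boundary defining function on D², let N : ℝⁿ-valued and f : ℝ-valued be smooth functions on a neighbourhood of D², and define v(p) = 2Γ(p)/(1 + ‖p‖²) + ρ(p)²·N(p) and u = (ρ·e^f, v) : D² → ℝ × ℝⁿ. Then the radial derivative ∂_r v(p) vanishes for every p ∈ S¹, and consequently for every p ∈ S¹ the image of the Fréchet derivative Du_p : ℝ² → ℝ × ℝⁿ contains the vector e₀ = (1,0); that is, the surface u(D²) meets the boundary hyperplane {0} × ℝⁿ orthogonally along its boundary curve γ. -/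
open Metric

noncomputable section

/-- The plane `ℝ²` with the Euclidean norm. -/
abbrev E2 : Type := EuclideanSpace ℝ (Fin 2)

/-- The vector `p^⊥ = (-p₂, p₁)`, the counterclockwise rotation of `p` by `π/2`;
directional derivatives in this direction at `p ∈ S¹` are tangential derivatives `∂_θ`. -/
def perp (p : E2) : E2 := (EuclideanSpace.equiv (Fin 2) ℝ).symm ![-(p 1), p 0]

/-- A boundary defining function on the closed unit disc `D²`: a smooth real-valued
function on an open neighbourhood `U` of `D²`, nonnegative on `D²`, whose zero set
within `D²` is exactly the unit circle, and whose Fréchet derivative is nonzero at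
every point of the unit circle. -/
structure IsBoundaryDefiningFunction (ρ : E2 → ℝ) (U : Set E2) : Prop where
  isOpen : IsOpen U
  disc_subset : closedBall (0 : E2) 1 ⊆ U
  smooth : ContDiffOn ℝ (⊤ : ℕ∞) ρ U
  nonneg : ∀ p ∈ closedBall (0 : E2) 1, 0 ≤ ρ p
  zero_iff : ∀ p ∈ closedBall (0 : E2) 1, (ρ p = 0 ↔ ‖p‖ = 1)
  fderiv_ne_zero : ∀ p : E2, ‖p‖ = 1 → fderiv ℝ ρ p ≠ 0

/-- Let `γ : S¹ → ℝⁿ` be a smooth embedding and `Γ` a smooth map on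
a neighbourhood of `D²` satisfying the stereobiharmonic boundary conditions
`Γ(p) = γ(p)` and `∂_r Γ(p) = γ(p)` for `p ∈ S¹`.  Let `ρ` be a boundary defining
function, `N` and `f` smooth, and set `v = 2Γ/(1+‖p‖²) + ρ²·N` and
`u = (ρ·e^f, v)`.  Then the radial derivative `∂_r v(p)` vanishes for every
`p ∈ S¹`, and the image of `Du_p` contains the vector `e₀ = (1,0)`: the surface
`u(D²)` meets the boundary hyperplane `{0} × ℝⁿ` orthogonally along `γ`. -/
theorem stereobiharmonic_model_orthogonal_at_boundary
    (n : ℕ) (hn : 1 ≤ n)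
    (ρ : E2 → ℝ) (U : Set E2) (hρ : IsBoundaryDefiningFunction ρ U)
    (W : Set E2) (hW : IsOpen W) (hWD : closedBall (0 : E2) 1 ⊆ W)
    (Γ N : E2 → EuclideanSpace ℝ (Fin n)) (f : E2 → ℝ)
    (hΓ : ContDiffOn ℝ (⊤ : ℕ∞) Γ W)
    (hN : ContDiffOn ℝ (⊤ : ℕ∞) N W)
    (hf : ContDiffOn ℝ (⊤ : ℕ∞) f W)
    (γ : E2 → EuclideanSpace ℝ (Fin n))
    (hγ_inj : Set.InjOn γ (sphere (0 : E2) 1))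
    (hγ'_ne : ∀ p : E2, ‖p‖ = 1 → fderiv ℝ Γ p (perp p) ≠ 0)
    (hΓ_bdry : ∀ p : E2, ‖p‖ = 1 → Γ p = γ p)
    (hΓ_rad : ∀ p : E2, ‖p‖ = 1 → fderiv ℝ Γ p p = γ p)
    (v : E2 → EuclideanSpace ℝ (Fin n))
    (hv : ∀ p : E2, v p = (2 / (1 + ‖p‖ ^ 2)) • Γ p + (ρ p) ^ 2 • N p)
    (u : E2 → ℝ × EuclideanSpace ℝ (Fin n))
    (hu : ∀ p : E2, u p = (ρ p * Real.exp (f p), v p)) :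
    ∀ p : E2, ‖p‖ = 1 →
      fderiv ℝ v p p = 0 ∧
      ((1 : ℝ), (0 : EuclideanSpace ℝ (Fin n))) ∈ Set.range (fderiv ℝ u p) := by
  intro p hp
  have hpD : p ∈ closedBall (0 : E2) 1 := by simp [hp]
  have hΓd : HasFDerivAt Γ (fderiv ℝ Γ p) p :=
    ((hΓ.contDiffAt (hW.mem_nhds (hWD hpD))).differentiableAt (by simp)).hasFDerivAt
  have hNd : HasFDerivAt N (fderiv ℝ N p) p :=
    ((hN.contDiffAt (hW.mem_nhds (hWD hpD))).differentiableAt (by simp)).hasFDerivAt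
  have hfd : HasFDerivAt f (fderiv ℝ f p) p :=
    ((hf.contDiffAt (hW.mem_nhds (hWD hpD))).differentiableAt (by simp)).hasFDerivAt
  have hρd : HasFDerivAt ρ (fderiv ℝ ρ p) p :=
    ((hρ.smooth.contDiffAt (hρ.isOpen.mem_nhds (hρ.disc_subset hpD))).differentiableAt
      (by simp)).hasFDerivAt
  have hρ0 : ρ p = 0 := (hρ.zero_iff p hpD).2 hp
  have hsq : HasFDerivAt (fun q : E2 => ‖q‖ ^ 2) (2 • innerSL ℝ p) p :=
    (hasStrictFDerivAt_norm_sq p).hasFDerivAt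
  have hg : HasDerivAt (fun t : ℝ => 2 / (1 + t)) (-(1 / 2)) (‖p‖ ^ 2) := by
    have h1 : HasDerivAt (fun t : ℝ => 1 + t) 1 (‖p‖ ^ 2) := (hasDerivAt_id _).const_add 1
    have h2 := (hasDerivAt_const (‖p‖ ^ 2) (2 : ℝ)).fun_div h1 (by positivity)
    have h3 : ((0 * (1 + ‖p‖ ^ 2) - 2 * 1) / (1 + ‖p‖ ^ 2) ^ 2 : ℝ) = -(1 / 2) := by
      rw [hp]; norm_num
    rw [h3] at h2
    exact h2
  have hA := hg.comp_hasFDerivAt p hsq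
  have hvd := (hA.smul hΓd).add ((hρd.pow 2).smul hNd)
  have hvd' := hvd.congr_of_eventuallyEq (f₁ := v) (Filter.Eventually.of_forall (fun q => by
    simp [hv q]))
  have hv0 : fderiv ℝ v p p = 0 := by
    rw [hvd'.fderiv]
    simp [hρ0, hp, hΓ_rad p hp, hΓ_bdry p hp]
    try norm_num
  refine ⟨hv0, ?_⟩
  have hud := (hρd.mul hfd.exp).prodMk hvd'.differentiableAt.hasFDerivAt
  have hud' := hud.congr_of_eventuallyEq (f₁ := u) (Filter.Eventually.of_forall (fun q => by
    simp [hu q]))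
  have hup : fderiv ℝ u p p = (Real.exp (f p) * fderiv ℝ ρ p p, 0) := by
    rw [hud'.fderiv]
    simp [hρ0, hv0]
  have hnn : p 0 ^ 2 + p 1 ^ 2 = 1 := by
    have := EuclideanSpace.norm_sq_eq p
    simp [hp, Fin.sum_univ_two] at this
    linarith
  have htan : fderiv ℝ ρ p (perp p) = 0 := by
    have hc : HasDerivAt (fun t : ℝ => Real.cos t • p + Real.sin t • perp p) (perp p) 0 := by
      have := ((Real.hasDerivAt_cos 0).smul_const p).add
        ((Real.hasDerivAt_sin 0).smul_const (perp p))
      simp only [Real.sin_zero, Real.cos_zero, neg_zero, zero_smul, zero_add, one_smul] at this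
      exact this
    have h0 : HasFDerivAt ρ (fderiv ℝ ρ p)
        ((fun t : ℝ => Real.cos t • p + Real.sin t • perp p) 0) := by simpa using hρd
    have h1 := h0.comp_hasDerivAt (0 : ℝ) hc
    have h2 : (ρ ∘ fun t : ℝ => Real.cos t • p + Real.sin t • perp p) = fun _ => 0 := by
      funext t
      have hn1 : ‖Real.cos t • p + Real.sin t • perp p‖ = 1 := by
        have h3 : ‖Real.cos t • p + Real.sin t • perp p‖ ^ 2 = 1 := by
          rw [EuclideanSpace.norm_sq_eq]
          simp [Fin.sum_univ_two, perp]
          have := Real.sin_sq_add_cos_sq t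
          linear_combination (Real.sin t ^ 2 + Real.cos t ^ 2) * hnn + this
        nlinarith [norm_nonneg (Real.cos t • p + Real.sin t • perp p)]
      exact (hρ.zero_iff _ (by simp [hn1])).2 hn1
    rw [h2] at h1
    exact h1.unique (hasDerivAt_const _ _)
  have hne : fderiv ℝ ρ p p ≠ 0 := by
    intro h
    apply hρ.fderiv_ne_zero p hp
    ext w
    have hw : w = (w 0 * p 0 + w 1 * p 1) • p + (w 1 * p 0 - w 0 * p 1) • perp p := by
      ext i
      fin_cases i
      · simp [perp]; linear_combination (-w 0) * hnn
      · simp [perp]; linear_combination (-w 1) * hnn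
    rw [hw, map_add, map_smul, map_smul, h, htan]
    simp
  refine ⟨(Real.exp (f p) * fderiv ℝ ρ p p)⁻¹ • p, ?_⟩
  rw [map_smul, hup]
  have := Real.exp_ne_zero (f p)
  ext1
  · simp; field_simp
  · simp

end
end

section
/- Let n ≥ 1 and define Φ(X,Y) = ((X² + ‖Y‖² − 1)/((X+1)² + ‖Y‖²), 2Y/((X+1)² + ‖Y‖²)). Then for every (X,Y) with X > 0 and every tangent vector (a,b) ∈ ℝ × ℝⁿ, the Fréchet derivative of Φ satisfies 4·‖DΦ_{(X,Y)}(a,b)‖² / (1 − ‖Φ(X,Y)‖²)² = (a² + ‖b‖²)/X². That is, Φ is an isometry from the half-space model of hyperbolic (n+1)-space, with metric (dX² + ‖dY‖²)/X², to the unit ball model, with metric 4‖dy‖²/(1−‖y‖²)². -/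
noncomputable section

/-- The map `Φ(X,Y) = ((X² + ‖Y‖² − 1)/((X+1)² + ‖Y‖²), 2Y/((X+1)² + ‖Y‖²))`
from the half-space model of hyperbolic `(n+1)`-space to the unit ball model. -/
def Phi (n : ℕ) (p : ℝ × EuclideanSpace ℝ (Fin n)) : ℝ × EuclideanSpace ℝ (Fin n) :=
  ((p.1 ^ 2 + ‖p.2‖ ^ 2 - 1) / ((p.1 + 1) ^ 2 + ‖p.2‖ ^ 2),
    (2 / ((p.1 + 1) ^ 2 + ‖p.2‖ ^ 2)) • p.2)

/-- `Φ` is an isometry from the half-space model, with metric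
`(dX² + ‖dY‖²)/X²`, to the unit ball model, with metric `4‖dy‖²/(1 − ‖y‖²)²`:
for every `(X,Y)` with `X > 0` and every tangent vector `(a,b)`,
`4‖DΦ_{(X,Y)}(a,b)‖²/(1 − ‖Φ(X,Y)‖²)² = (a² + ‖b‖²)/X²`,
where all norms on `ℝ × ℝⁿ = ℝ^{1+n}` are Euclidean. -/
theorem phi_isometry_halfSpace_to_ball (n : ℕ) (hn : 1 ≤ n)
    (X : ℝ) (Y : EuclideanSpace ℝ (Fin n)) (hX : 0 < X)
    (a : ℝ) (b : EuclideanSpace ℝ (Fin n)) :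
    4 * ((fderiv ℝ (Phi n) (X, Y) (a, b)).1 ^ 2 + ‖(fderiv ℝ (Phi n) (X, Y) (a, b)).2‖ ^ 2)
        / (1 - ((Phi n (X, Y)).1 ^ 2 + ‖(Phi n (X, Y)).2‖ ^ 2)) ^ 2
      = (a ^ 2 + ‖b‖ ^ 2) / X ^ 2 := by
  set D : ℝ := (X + 1) ^ 2 + ‖Y‖ ^ 2 with hD
  have hDpos : 0 < D := by positivity
  have hD0 : D ≠ 0 := hDpos.ne'
  have hdiff : DifferentiableAt ℝ (Phi n) (X, Y) := by
    have hn2 : DifferentiableAt ℝ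
        (fun p : ℝ × EuclideanSpace ℝ (Fin n) => ‖p.2‖ ^ 2) (X, Y) :=
      differentiableAt_snd.norm_sq ℝ
    have hden : DifferentiableAt ℝ
        (fun p : ℝ × EuclideanSpace ℝ (Fin n) => (p.1 + 1) ^ 2 + ‖p.2‖ ^ 2) (X, Y) :=
      ((differentiableAt_fst.add_const 1).pow 2).add hn2
    have hnum : DifferentiableAt ℝ
        (fun p : ℝ × EuclideanSpace ℝ (Fin n) => p.1 ^ 2 + ‖p.2‖ ^ 2 - 1) (X, Y) :=
      ((differentiableAt_fst.pow 2).add hn2).sub_const 1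
    have h1 : DifferentiableAt ℝ (fun p : ℝ × EuclideanSpace ℝ (Fin n) =>
        (p.1 ^ 2 + ‖p.2‖ ^ 2 - 1) / ((p.1 + 1) ^ 2 + ‖p.2‖ ^ 2)) (X, Y) :=
      by
      simp only [div_eq_mul_inv]
      exact hnum.fun_mul (hden.fun_inv (by exact hD0))
    have h3 : DifferentiableAt ℝ (fun p : ℝ × EuclideanSpace ℝ (Fin n) =>
        2 / ((p.1 + 1) ^ 2 + ‖p.2‖ ^ 2)) (X, Y) :=
      by
      simp only [div_eq_mul_inv]
      exact (differentiableAt_const (2 : ℝ)).fun_mul (hden.fun_inv (by exact hD0))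
    have h2 := h3.fun_smul differentiableAt_snd
    exact h1.prodMk h2
  have hx : HasDerivAt (fun t : ℝ => X + t * a) a 0 := by
    simpa using ((hasDerivAt_id (0 : ℝ)).mul_const a).const_add X
  have hy : HasDerivAt (fun t : ℝ => Y + t • b) b 0 := by
    simpa using ((hasDerivAt_id (0 : ℝ)).smul_const b).const_add Y
  have hcurve : HasDerivAt (fun t : ℝ => Phi n (X + t * a, Y + t • b))
      (fderiv ℝ (Phi n) (X, Y) (a, b)) 0 := by
    have hf : HasFDerivAt (Phi n) (fderiv ℝ (Phi n) (X, Y))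
        ((fun t : ℝ => (X + t * a, Y + t • b)) 0) := by
      simpa using hdiff.hasFDerivAt
    exact hf.comp_hasDerivAt (0 : ℝ) (hx.prodMk hy)
  set s : ℝ := inner ℝ Y b with hs
  have hny : HasDerivAt (fun t : ℝ => ‖Y + t • b‖ ^ 2) (2 * s) 0 := by
    simpa using hy.norm_sq
  have hden : HasDerivAt (fun t : ℝ => (X + t * a + 1) ^ 2 + ‖Y + t • b‖ ^ 2)
      (2 * (X + 1) * a + 2 * s) 0 := by
    simpa using ((hx.add_const 1).fun_pow 2).fun_add hny
  have hnum : HasDerivAt (fun t : ℝ => (X + t * a) ^ 2 + ‖Y + t • b‖ ^ 2 - 1)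
      (2 * X * a + 2 * s) 0 := by
    simpa using ((hx.fun_pow 2).fun_add hny).sub_const 1
  have hne : (X + 0 * a + 1) ^ 2 + ‖Y + (0 : ℝ) • b‖ ^ 2 ≠ 0 := by
    simpa using hD0
  have h1 := hnum.fun_div hden hne
  have h2 := ((hasDerivAt_const (0 : ℝ) (2 : ℝ)).fun_div hden hne).fun_smul hy
  have key := hcurve.unique (h1.prodMk h2)
  rw [key]
  simp only [zero_mul, zero_smul, add_zero, zero_sub, Phi, ← hD]
  have hN : ∀ u v : ℝ, ‖u • b + v • Y‖ ^ 2
      = u ^ 2 * ‖b‖ ^ 2 + 2 * u * v * s + v ^ 2 * ‖Y‖ ^ 2 := by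
    intro u v
    rw [norm_add_sq_real, inner_smul_left, inner_smul_right, real_inner_comm, ← hs,
      norm_smul, norm_smul, mul_pow, mul_pow, Real.norm_eq_abs, Real.norm_eq_abs, sq_abs, sq_abs]
    simp only [conj_trivial]
    ring
  rw [hN, norm_smul, mul_pow, Real.norm_eq_abs, sq_abs]
  have hY : ‖Y‖ ^ 2 = D - (X + 1) ^ 2 := by rw [hD]; ring
  rw [hY]
  have hden2 : 1 - (((X ^ 2 + (D - (X + 1) ^ 2) - 1) / D) ^ 2
      + (2 / D) ^ 2 * (D - (X + 1) ^ 2)) = 4 * X / D := by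
    field_simp
    ring
  rw [hden2]
  field_simp
  ring

end
end
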